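/- Assume α, β > −1 and let ρ(θ;N) = (1 − cos(Nθ))^{α+1/2}·(1 + cos(Nθ))^{β+1/2}. Then the operator L(N) is symmetric with respect to the weight ρ(θ;N) on the unit circle: for all Laurent polynomials f and g with complex coefficients (viewed as functions on ℂ∖{0}), ∫_0^{2π} (L(N)f)(e^{iθ})·conj(g(e^{iθ}))·ρ(θ;N) dθ = ∫_0^{2π} f(e^{iθ})·conj((L(N)g)(e^{iθ}))·ρ(θ;N) dθ, where the integrands are defined for all θ with e^{2iNθ} ≠ 1, i.e. for almost every θ. -/

import Mathlib

open Finset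

/-- Monic OPUC associated to a sequence of (real) Verblunsky parameters. -/
noncomputable def Phi (c : ℕ → ℝ) : ℕ → ℂ → ℂ
  | 0, _ => 1
  | n + 1, z => z * Phi c n z - (c n : ℂ) * z ^ n * Phi c n z⁻¹

/-- CMV Laurent polynomials: ψ_{2m} z = z^m Φ_{2m}(1/z), ψ_{2m+1} z = z^{-m} Φ_{2m+1}(z). -/
noncomputable def psi (c : ℕ → ℝ) (n : ℕ) (z : ℂ) : ℂ :=
  if Even n then z ^ (n / 2) * Phi c n z⁻¹
  else z ^ (-((n / 2 : ℕ) : ℤ)) * Phi c n z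

/-- Verblunsky parameters of the Jacobi OPUC. -/
noncomputable def jacobiA (α β : ℝ) (n : ℕ) : ℝ :=
  -(α + 1 / 2 + (-1 : ℝ) ^ (n + 1) * (β + 1 / 2)) / (n + α + β + 2)

/-- Sieved Verblunsky parameters: a_n(N) = a_{k-1} if n = N k - 1 (k ≥ 1), 0 otherwise. -/
noncomputable def sievedA (α β : ℝ) (N n : ℕ) : ℝ :=
  if N ∣ (n + 1) then jacobiA α β ((n + 1) / N - 1) else 0

/-- The primitive N-th root of unity q = exp(2πi/N). -/
noncomputable def qN (N : ℕ) : ℂ := Complex.exp (2 * Real.pi * Complex.I / N)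

/-- The coefficients A_k(z;N) of the Dunkl-type operator L(N). -/
noncomputable def Acoef (α β : ℝ) (N k : ℕ) (z : ℂ) : ℂ :=
  if Even N then
    ((α : ℂ) + β + 1 + (-1 : ℂ) ^ k * ((α : ℂ) - β)) * z ^ 2 / (qN N ^ k - z ^ 2)
  else
    (((α : ℂ) + β + 1) * z ^ 2 +
        (if Even k then qN N ^ ((k : ℤ) / 2) else qN N ^ (((k : ℤ) - (N : ℤ)) / 2)) *
          ((α : ℂ) - β) * z) /
      (qN N ^ k - z ^ 2)

/-- B(z) = N((α+β+1) z^{2N} + (α-β) z^N)/(z^{2N} - 1). -/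
noncomputable def Bfun (α β : ℝ) (N : ℕ) (z : ℂ) : ℂ :=
  (N : ℂ) * (((α : ℂ) + β + 1) * z ^ (2 * N) + ((α : ℂ) - β) * z ^ N) / (z ^ (2 * N) - 1)

/-- The Dunkl-type operator L(N). -/
noncomputable def Lop (α β : ℝ) (N : ℕ) (f : ℂ → ℂ) : ℂ → ℂ := fun z =>
  z * deriv f z + ∑ k ∈ Finset.range N, Acoef α β N k z * (f (qN N ^ k / z) - f z)

/-- A function ℂ∖{0} → ℂ is a Laurent polynomial. -/
def IsLaurentPoly (f : ℂ → ℂ) : Prop :=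
  ∃ (m : ℕ) (p : Polynomial ℂ), ∀ z : ℂ, z ≠ 0 → f z = Polynomial.eval z p / z ^ m

/-- Sieved Jacobi polynomial of the first kind, as a function of z (x = z + 1/z). -/
noncomputable def sievP (α β : ℝ) (N n : ℕ) (z : ℂ) : ℂ :=
  psi (sievedA α β N) (2 * n) z
    + (1 + (sievedA α β N (2 * n - 1) : ℂ)) * psi (sievedA α β N) (2 * n - 1) z

/-- χ_n(z) = (z - 1/z) Q_{n-1}(x(z)), with Q the sieved Jacobi polynomial of 2nd kind. -/
noncomputable def sievChi (α β : ℝ) (N n : ℕ) (z : ℂ) : ℂ :=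
  -psi (sievedA α β N) (2 * n) z
    + (1 - (sievedA α β N (2 * n - 1) : ℂ)) * psi (sievedA α β N) (2 * n - 1) z


open Complex MeasureTheory Filter Topology Asymptotics

/-! ### Part 1: algebra of the coefficients -/

lemma qN_prim (N : ℕ) (hN : 1 ≤ N) : IsPrimitiveRoot (qN N) N :=
  Complex.isPrimitiveRoot_exp N (by omega)

lemma qN_pow_N (N : ℕ) (hN : 1 ≤ N) : qN N ^ N = 1 := (qN_prim N hN).pow_eq_one

lemma qN_ne_zero (N : ℕ) : qN N ≠ 0 := Complex.exp_ne_zero _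

lemma qN_norm (N : ℕ) (hN : 1 ≤ N) : ‖qN N‖ = 1 :=
  (qN_prim N hN).norm'_eq_one (by omega)

lemma qN_pow_norm (N : ℕ) (hN : 1 ≤ N) (k : ℕ) : ‖qN N ^ k‖ = 1 := by
  rw [norm_pow, qN_norm N hN, one_pow]

lemma qN_pow_pow (N : ℕ) (hN : 1 ≤ N) (k : ℕ) : (qN N ^ k) ^ N = 1 := by
  rw [← pow_mul, mul_comm, pow_mul, qN_pow_N N hN, one_pow]

/-- Uniform description of the coefficients. -/
lemma Acoef_form (N : ℕ) (hN : 1 ≤ N) : ∃ m s : ℕ, 1 ≤ m ∧ m ≤ N ∧ 2 * m + s = N + 2 ∧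
    ∀ (α β : ℝ) (k : ℕ) (z : ℂ), Acoef α β N k z =
      (((α : ℂ) + β + 1) * z ^ 2 + ((α : ℂ) - β) * (qN N ^ k) ^ m * z ^ s) / (qN N ^ k - z ^ 2) := by
  have hq := qN_pow_N N hN
  rcases Nat.even_or_odd N with he | ho
  · obtain ⟨m, hm⟩ := he
    refine ⟨m, 2, by omega, by omega, by omega, ?_⟩
    intro α β k z
    have hqm : qN N ^ m = -1 := by
      have h2 : (qN N ^ m) ^ 2 = 1 := by rw [← pow_mul, show m * 2 = N by omega, hq]
      have h2' : qN N ^ m * qN N ^ m = 1 := by rw [← sq]; exact h2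
      rcases mul_self_eq_one_iff.1 h2' with h | h
      · exact absurd h ((qN_prim N hN).pow_ne_one_of_pos_of_lt (by omega) (by omega))
      · exact h
    have : (qN N ^ k) ^ m = (-1) ^ k := by rw [← pow_mul, mul_comm, pow_mul, hqm]
    rw [Acoef, if_pos ⟨m, hm⟩, this]
    ring
  · obtain ⟨m, hm⟩ := ho
    refine ⟨m + 1, 1, by omega, by omega, by omega, ?_⟩
    intro α β k z
    have hne : ¬ Even N := by rw [Nat.not_even_iff_odd]; exact ⟨m, hm⟩
    have : (if Even k then qN N ^ ((k : ℤ) / 2) else qN N ^ (((k : ℤ) - (N : ℤ)) / 2))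
        = (qN N ^ k) ^ (m + 1) := by
      have hqz : qN N ^ (N : ℤ) = 1 := by exact_mod_cast hq
      split_ifs with hk
      · obtain ⟨l, hl⟩ := hk
        have : (k : ℤ) / 2 = l := by omega
        rw [this, zpow_natCast, ← pow_mul, show k * (m + 1) = N * l + l by subst hl hm; ring,
          pow_add, pow_mul, hq, one_pow, one_mul]
      · rw [Nat.not_even_iff_odd] at hk
        obtain ⟨l, hl⟩ := hk
        have : ((k : ℤ) - (N : ℤ)) / 2 = l - m := by omega
        rw [this, ← pow_mul, ← zpow_natCast,
          show ((k * (m + 1) : ℕ) : ℤ) = (N : ℤ) * (l + 1) + (l - m) by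
            subst hl hm; push_cast; ring,
          zpow_add₀ (qN_ne_zero N), zpow_mul, hqz, one_zpow, one_mul]
    rw [Acoef, if_neg hne, this]
    ring

lemma conj_of_norm {z : ℂ} (hz : ‖z‖ = 1) : (starRingEnd ℂ) z = z⁻¹ :=
  (Complex.inv_eq_conj hz).symm

lemma Acoef_refl (α β : ℝ) (N : ℕ) (hN : 1 ≤ N) (k : ℕ) (z : ℂ) (hz : ‖z‖ = 1) :
    (starRingEnd ℂ) (Acoef α β N k z) = Acoef α β N k (qN N ^ k / z) := by
  obtain ⟨m, s, h1, h2, h3, h⟩ := Acoef_form N hN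
  rw [h, h]
  have hz0 : z ≠ 0 := by rintro rfl; simp at hz
  have hu0 : qN N ^ k ≠ 0 := pow_ne_zero _ (qN_ne_zero N)
  have hun := qN_pow_norm N hN k
  have huN := qN_pow_pow N hN k
  generalize qN N ^ k = u at *
  simp only [map_div₀, map_add, map_sub, map_mul, map_pow, Complex.conj_ofReal, map_one,
    conj_of_norm hz, conj_of_norm hun]
  have key : u ^ m * u ^ m * u ^ s = u ^ 2 := by
    rw [← pow_add, ← pow_add, show m + m + s = N + 2 by omega, pow_add, huN, one_mul]
  have e1 : u⁻¹ - z⁻¹ ^ 2 = (u - (u / z) ^ 2) / u ^ 2 := by field_simp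
  have e2 : ((α : ℂ) + β + 1) * z⁻¹ ^ 2 + ((α : ℂ) - β) * u⁻¹ ^ m * z⁻¹ ^ s
      = (((α : ℂ) + β + 1) * (u / z) ^ 2 + ((α : ℂ) - β) * u ^ m * (u / z) ^ s) / u ^ 2 := by
    have : u⁻¹ ^ m = u ^ m * u ^ s / u ^ 2 := by
      rw [← key, inv_pow]; field_simp
    rw [this, div_pow, div_pow, inv_pow, inv_pow]; field_simp
  rw [e1, e2, div_div_div_cancel_right₀ (pow_ne_zero 2 hu0)]

lemma sum_qN_pow (N : ℕ) (hN : 1 ≤ N) (i : ℕ) :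
    ∑ k ∈ Finset.range N, (qN N ^ k) ^ i = if N ∣ i then (N : ℂ) else 0 := by
  have hp := qN_prim N hN
  have h1 : ∀ k, (qN N ^ k) ^ i = (qN N ^ i) ^ k := fun k => by
    rw [← pow_mul, mul_comm, pow_mul]
  simp only [h1]
  split_ifs with h
  · rw [(hp.pow_eq_one_iff_dvd i).2 h]; simp
  · have hne : qN N ^ i ≠ 1 := fun h' => h ((hp.pow_eq_one_iff_dvd i).1 h')
    rw [geom_sum_eq hne, qN_pow_pow N hN, sub_self, zero_div]

lemma sum_frac (N : ℕ) (hN : 1 ≤ N) (m : ℕ) (h1 : 1 ≤ m) (h2 : m ≤ N) (u : ℂ) (hu : u ^ N ≠ 1) :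
    ∑ k ∈ Finset.range N, (qN N ^ k) ^ m / (qN N ^ k - u) = N * u ^ (m - 1) / (1 - u ^ N) := by
  have hd : (1 - u ^ N) ≠ 0 := sub_ne_zero.2 (Ne.symm hu)
  rw [eq_div_iff hd, Finset.sum_mul]
  have : ∀ k ∈ Finset.range N, (qN N ^ k) ^ m / (qN N ^ k - u) * (1 - u ^ N)
      = ∑ i ∈ Finset.range N, (qN N ^ k) ^ (i + m) * u ^ (N - 1 - i) := by
    intro k _
    have hv := qN_pow_pow N hN k
    have hne : qN N ^ k - u ≠ 0 := by
      intro h; rw [sub_eq_zero] at h; rw [h] at hv; exact hu hv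
    generalize qN N ^ k = v at *
    have := (Commute.all v u).geom_sum₂_mul N
    rw [hv] at this
    rw [← this]
    field_simp
    rw [Finset.mul_sum]
    exact Finset.sum_congr rfl fun i _ => by rw [pow_add]; ring
  rw [Finset.sum_congr rfl this, Finset.sum_comm]
  simp only [← Finset.sum_mul, sum_qN_pow N hN]
  rw [Finset.sum_eq_single (N - m)]
  · rw [if_pos (by rw [Nat.sub_add_cancel h2]), show N - 1 - (N - m) = m - 1 by omega]
  · intro i hi hne
    rw [Finset.mem_range] at hi
    rw [if_neg, zero_mul]
    rintro ⟨c, hc⟩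
    have : c = 1 := by
      have : c < 2 := by
        by_contra hcon
        have : N * 2 ≤ N * c := Nat.mul_le_mul_left _ (by omega)
        omega
      have : c ≠ 0 := by rintro rfl; omega
      omega
    subst this; omega
  · intro h; exact absurd (Finset.mem_range.2 (by omega)) h

lemma sum_Acoef (α β : ℝ) (N : ℕ) (hN : 1 ≤ N) (z : ℂ) (hz : z ^ (2 * N) ≠ 1) :
    ∑ k ∈ Finset.range N, Acoef α β N k z = - Bfun α β N z := by
  obtain ⟨m, s, h1, h2, h3, h⟩ := Acoef_form N hN
  simp only [h]
  have hu : (z ^ 2) ^ N ≠ 1 := by rwa [← pow_mul]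
  have e1 := sum_frac N hN N hN le_rfl (z ^ 2) hu
  have e2 := sum_frac N hN m h1 h2 (z ^ 2) hu
  simp only [qN_pow_pow N hN] at e1
  have : ∀ k ∈ Finset.range N, (((α : ℂ) + β + 1) * z ^ 2 +
      ((α : ℂ) - β) * (qN N ^ k) ^ m * z ^ s) / (qN N ^ k - z ^ 2)
      = ((α : ℂ) + β + 1) * z ^ 2 * (1 / (qN N ^ k - z ^ 2))
        + ((α : ℂ) - β) * z ^ s * ((qN N ^ k) ^ m / (qN N ^ k - z ^ 2)) := by
    intro k _; ring
  rw [Finset.sum_congr rfl this, Finset.sum_add_distrib, ← Finset.mul_sum, ← Finset.mul_sum, e1, e2,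
    Bfun]
  have hd : z ^ (2 * N) - 1 ≠ 0 := sub_ne_zero.2 hz
  have hd' : 1 - z ^ (2 * N) ≠ 0 := sub_ne_zero.2 (Ne.symm hz)
  rw [← pow_mul z 2 N, ← pow_mul z 2, ← pow_mul z 2]
  have e3 : z ^ 2 * z ^ (2 * (N - 1)) = z ^ (2 * N) := by rw [← pow_add]; congr 1; omega
  have e4 : z ^ s * z ^ (2 * (m - 1)) = z ^ N := by rw [← pow_add]; congr 1; omega
  rw [← neg_sub (z ^ (2 * N)) 1, div_neg, div_neg, ← e4]
  nth_rewrite 3 [← e3]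
  ring

/-- Sum over the roots of unity, reflected. -/
lemma sum_refl (N : ℕ) (hN : 1 ≤ N) (ψ : ℂ → ℂ) (k : ℕ) :
    ∑ j ∈ Finset.range N, ψ (qN N ^ k / qN N ^ j) = ∑ j ∈ Finset.range N, ψ (qN N ^ j) := by
  have hp := qN_prim N hN
  have hq0 := qN_ne_zero N
  have hsum : ∀ φ : ℂ → ℂ, ∑ j ∈ Finset.range N, φ (qN N ^ j)
      = ∑ ζ ∈ Polynomial.nthRootsFinset N (1 : ℂ), φ ζ := by
    intro φ
    refine Finset.sum_bij (fun j _ => qN N ^ j) ?_ ?_ ?_ ?_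
    · intro j _
      rw [Polynomial.mem_nthRootsFinset (by omega)]; exact qN_pow_pow N hN j
    · intro a ha b hb hab
      exact hp.pow_inj (Finset.mem_range.1 ha) (Finset.mem_range.1 hb) hab
    · intro ζ hζ
      rw [Polynomial.mem_nthRootsFinset (by omega)] at hζ
      have : NeZero N := ⟨by omega⟩
      obtain ⟨i, hi, rfl⟩ := hp.eq_pow_of_pow_eq_one hζ
      exact ⟨i, Finset.mem_range.2 hi, rfl⟩
    · intros; rfl
  rw [hsum (fun x => ψ (qN N ^ k / x)), hsum ψ]
  have hmem : ∀ ζ ∈ Polynomial.nthRootsFinset N (1 : ℂ),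
      qN N ^ k / ζ ∈ Polynomial.nthRootsFinset N (1 : ℂ) := by
    intro ζ hζ
    rw [Polynomial.mem_nthRootsFinset (by omega)] at hζ ⊢
    rw [div_pow, qN_pow_pow N hN, hζ, div_one]
  refine Finset.sum_nbij' (fun ζ => qN N ^ k / ζ) (fun ζ => qN N ^ k / ζ) hmem hmem ?_ ?_ ?_
  · intro ζ _
    exact div_div_cancel₀ (pow_ne_zero _ hq0)
  · intro ζ _
    exact div_div_cancel₀ (pow_ne_zero _ hq0)
  · intros; rfl

/-! ### Part 2: the weight -/

/-- The weight function. -/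
noncomputable def Wt (α β : ℝ) (N : ℕ) (θ : ℝ) : ℝ :=
  (1 - Real.cos (N * θ)) ^ (α + 1 / 2) * (1 + Real.cos (N * θ)) ^ (β + 1 / 2)

lemma Wt_add (α β : ℝ) (N : ℕ) (hN : 1 ≤ N) (j : ℕ) (θ : ℝ) :
    Wt α β N (θ + 2 * Real.pi * j / N) = Wt α β N θ := by
  have hN' : (N : ℝ) ≠ 0 := by positivity
  have : (N : ℝ) * (θ + 2 * Real.pi * j / N) = N * θ + j * (2 * Real.pi) := by field_simp
  rw [Wt, Wt, this, Real.cos_add_nat_mul_two_pi]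

lemma Wt_neg (α β : ℝ) (N : ℕ) (θ : ℝ) : Wt α β N (-θ) = Wt α β N θ := by
  rw [Wt, Wt, mul_neg, Real.cos_neg]

lemma Wt_nonneg (α β : ℝ) (N : ℕ) (θ : ℝ) : 0 ≤ Wt α β N θ :=
  mul_nonneg (Real.rpow_nonneg (by linarith [Real.cos_le_one (N * θ)]) _)
    (Real.rpow_nonneg (by linarith [Real.neg_one_le_cos (N * θ)]) _)

lemma Wt_measurable (α β : ℝ) (N : ℕ) : Measurable (Wt α β N) := by
  unfold Wt
  fun_prop

lemma abs_sin_mul_Wt (α β : ℝ) (hα : -1 < α) (hβ : -1 < β) (N : ℕ) (θ : ℝ) :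
    |Real.sin (N * θ)| * Wt α β N θ =
      (1 - Real.cos (N * θ)) ^ (α + 1) * (1 + Real.cos (N * θ)) ^ (β + 1) := by
  have h1 : 0 ≤ 1 - Real.cos (N * θ) := by linarith [Real.cos_le_one (N * θ)]
  have h2 : 0 ≤ 1 + Real.cos (N * θ) := by linarith [Real.neg_one_le_cos (N * θ)]
  have h3 : |Real.sin (N * θ)| = (1 - Real.cos (N * θ)) ^ ((1:ℝ) / 2)
      * (1 + Real.cos (N * θ)) ^ ((1:ℝ) / 2) := by
    rw [Real.abs_sin_eq_sqrt_one_sub_cos_sq, ← Real.mul_rpow h1 h2, ← Real.sqrt_eq_rpow]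
    congr 1; ring
  have h4 := Real.rpow_add' h1 (y := 1 / 2) (z := α + 1 / 2) (by linarith)
  have h5 := Real.rpow_add' h2 (y := 1 / 2) (z := β + 1 / 2) (by linarith)
  rw [h3, Wt, show α + 1 = 1 / 2 + (α + 1 / 2) by ring, show β + 1 = 1 / 2 + (β + 1 / 2) by ring,
    h4, h5]
  ring

lemma sin_mul_Wt_tendsto (α β : ℝ) (hα : -1 < α) (hβ : -1 < β) (N : ℕ) (θ₀ : ℝ)
    (h : Real.sin (N * θ₀) = 0) :
    Tendsto (fun θ => |Real.sin (N * θ)| * Wt α β N θ) (𝓝 θ₀) (𝓝 0) := by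
  have h0 : |Real.sin (N * θ₀)| * Wt α β N θ₀ = 0 := by rw [h]; simp
  rw [abs_sin_mul_Wt α β hα hβ] at h0
  simp only [abs_sin_mul_Wt α β hα hβ]
  rw [← h0]
  have : Continuous fun θ : ℝ =>
      (1 - Real.cos (N * θ)) ^ (α + 1) * (1 + Real.cos (N * θ)) ^ (β + 1) := by
    refine Continuous.mul ?_ ?_
    · exact (by fun_prop : Continuous fun θ : ℝ => 1 - Real.cos (N * θ)).rpow_const
        fun _ => Or.inr (by linarith)
    · exact (by fun_prop : Continuous fun θ : ℝ => 1 + Real.cos (N * θ)).rpow_const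
        fun _ => Or.inr (by linarith)
  exact this.tendsto θ₀

lemma cos_bounds (x : ℝ) (h : Real.sin x ≠ 0) : 0 < 1 - Real.cos x ∧ 0 < 1 + Real.cos x := by
  have h1 := Real.sin_sq_add_cos_sq x
  have h2 : 0 < Real.sin x ^ 2 := by positivity
  have h3 := Real.cos_le_one x
  have h4 := Real.neg_one_le_cos x
  constructor <;> by_contra hc <;> nlinarith

lemma Wt_hasDerivAt (α β : ℝ) (N : ℕ) (θ : ℝ) (h : Real.sin (N * θ) ≠ 0) :
    HasDerivAt (Wt α β N) (Wt α β N θ *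
      (N * (((α + β + 1) * Real.cos (N * θ) + (α - β)) / Real.sin (N * θ)))) θ := by
  obtain ⟨h1, h2⟩ := cos_bounds _ h
  have hc : HasDerivAt (fun θ : ℝ => Real.cos (N * θ)) (-Real.sin (N * θ) * N) θ := by
    have := ((hasDerivAt_id θ).const_mul (N : ℝ)).cos
    simpa using this
  have d1 := (hc.const_sub 1).rpow_const (p := α + 1 / 2) (Or.inl h1.ne')
  have d2 := (hc.const_add 1).rpow_const (p := β + 1 / 2) (Or.inl h2.ne')
  have := d1.mul d2
  refine this.congr_deriv ?_
  have e := Real.sin_sq_add_cos_sq (N * θ)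
  rw [Wt, Real.rpow_sub h1, Real.rpow_sub h2, Real.rpow_one, Real.rpow_one]
  generalize (1 - Real.cos (N * θ)) ^ (α + 1 / 2) = A
  generalize (1 + Real.cos (N * θ)) ^ (β + 1 / 2) = B
  generalize Real.sin (N * θ) = s at *
  generalize Real.cos (N * θ) = c at *
  have hs : s ^ 2 = (1 - c) * (1 + c) := by linarith
  have h1' := h1.ne'
  have h2' := h2.ne'
  field_simp
  rw [hs]
  field_simp
  ring

lemma Wt_continuousAt (α β : ℝ) (N : ℕ) (θ : ℝ) (h : Real.sin (N * θ) ≠ 0) :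
    ContinuousAt (Wt α β N) θ := (Wt_hasDerivAt α β N θ h).continuousAt

lemma rpow_aux (y s a b : ℝ) (ha : 0 ≤ a) (hb : 0 < b) (h : s ^ 2 = a * b) :
    a ^ y = |s| ^ (2 * y) * b ^ (-y) := by
  rw [Real.rpow_mul (abs_nonneg s), Real.rpow_two, sq_abs, h, Real.mul_rpow ha hb.le, mul_assoc,
    ← Real.rpow_add hb, add_neg_cancel, Real.rpow_zero, mul_one]

lemma abs_rpow_integrableAt (r : ℝ) (hr : -1 < r) (c : ℝ) :
    IntegrableAtFilter (fun x : ℝ => |x - c| ^ r) (𝓝 c) volume := by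
  have h1 : IntervalIntegrable (fun x : ℝ => |x| ^ r) volume 0 1 := by
    refine (intervalIntegral.intervalIntegrable_rpow' (a := 0) (b := 1) hr).congr ?_
    intro x hx
    rw [Set.uIoc_of_le zero_le_one] at hx
    simp only [abs_of_pos hx.1]
  have h2 : IntervalIntegrable (fun x : ℝ => |x| ^ r) volume (-1) 0 := by
    have := (IntervalIntegrable.iff_comp_neg (by simp)).1 h1
    simpa using this.symm
  have h3 := (h2.trans h1).comp_sub_right c
  have h4 := (intervalIntegrable_iff_integrableOn_Ioo_of_le (by linarith)).1 h3
  exact ⟨Set.Ioo (-1 + c) (1 + c), Ioo_mem_nhds (by linarith) (by linarith), h4⟩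

lemma sin_theta (N : ℕ) (hN : 1 ≤ N) (θ₀ : ℝ) (h : Real.sin (N * θ₀) = 0) :
    (fun θ => |Real.sin (N * θ)|) =Θ[𝓝 θ₀] (fun θ => |θ - θ₀|) := by
  have hd : HasDerivAt (fun θ : ℝ => Real.sin (N * θ)) (Real.cos (N * θ₀) * N) θ₀ := by
    have := ((hasDerivAt_id θ₀).const_mul (N : ℝ)).sin
    simpa using this
  have hne : Real.cos (N * θ₀) * N ≠ 0 := by
    have := Real.sin_sq_add_cos_sq (N * θ₀)
    have hN' : (N : ℝ) ≠ 0 := by positivity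
    refine mul_ne_zero ?_ hN'
    intro hc; rw [h, hc] at this; norm_num at this
  have h1 := HasDerivAtFilter.isTheta_sub hd hne
  have ht : Tendsto (fun θ : ℝ => (θ, θ₀)) (𝓝 θ₀) (𝓝 θ₀ ×ˢ pure θ₀) :=
    tendsto_id.prodMk tendsto_const_pure
  have this : (fun θ : ℝ => Real.sin (N * θ)) =Θ[𝓝 θ₀] (fun θ => θ - θ₀) := by
    have h2 := h1.1.comp_tendsto ht
    have h3 := h1.2.comp_tendsto ht
    simp only [Function.comp_def, h, sub_zero] at h2 h3
    exact ⟨h2, h3⟩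
  exact this.norm_left.norm_right

lemma Wt_integrableAt (α β : ℝ) (hα : -1 < α) (hβ : -1 < β) (N : ℕ) (hN : 1 ≤ N) (θ₀ : ℝ) :
    IntegrableAtFilter (Wt α β N) (𝓝 θ₀) volume := by
  have hsm : StronglyMeasurableAtFilter (Wt α β N) (𝓝 θ₀) volume :=
    (Wt_measurable α β N).aestronglyMeasurable.stronglyMeasurableAtFilter
  have gen : ∀ (y x : ℝ) (c : ℝ → ℝ), Continuous c → 0 < c θ₀ → -1 < y →
      Real.sin (N * θ₀) = 0 →
      (∀ᶠ θ in 𝓝 θ₀, Wt α β N θ = |Real.sin (N * θ)| ^ (2 * (y + 1 / 2)) * c θ ^ x) →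
      IntegrableAtFilter (Wt α β N) (𝓝 θ₀) volume := by
    intro y x c hc hc0 hy hs hev
    refine IsBigO.integrableAtFilter ?_ hsm (abs_rpow_integrableAt (2 * (y + 1 / 2)) (by linarith) θ₀)
    refine IsBigO.congr' ?_ (EventuallyEq.symm hev) EventuallyEq.rfl
    have hb : (fun θ => c θ ^ x) =O[𝓝 θ₀] (fun _ => (1 : ℝ)) := by
      have : ContinuousAt (fun θ => c θ ^ x) θ₀ := hc.continuousAt.rpow_const (Or.inl hc0.ne')
      exact this.tendsto.isBigO_one ℝ
    have ht := (IsTheta.rpow (r := 2 * (y + 1 / 2)) (Eventually.of_forall fun _ => abs_nonneg _)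
      (Eventually.of_forall fun _ => abs_nonneg _) (sin_theta N hN θ₀ hs)).1
    simpa using ht.mul hb
  by_cases hs : Real.sin (N * θ₀) = 0
  · have hsq : ∀ θ : ℝ, Real.sin (N * θ) ^ 2 = (1 - Real.cos (N * θ)) * (1 + Real.cos (N * θ)) := by
      intro θ; have := Real.sin_sq_add_cos_sq (N * θ); linarith
    have hc1 : Continuous fun θ : ℝ => 1 - Real.cos (N * θ) := by fun_prop
    have hc2 : Continuous fun θ : ℝ => 1 + Real.cos (N * θ) := by fun_prop
    have h0 := hsq θ₀
    rw [hs] at h0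
    by_cases hcos : 0 < 1 + Real.cos (N * θ₀)
    · refine gen α (β - α) _ hc2 hcos hα hs ?_
      filter_upwards [hc2.continuousAt.eventually (lt_mem_nhds hcos)] with θ hθ
      rw [Wt, rpow_aux (α + 1 / 2) _ _ _ (by linarith [Real.cos_le_one (N * θ)]) hθ (hsq θ),
        mul_assoc, ← Real.rpow_add hθ]
      congr 2; ring
    · have hcos' : 0 < 1 - Real.cos (N * θ₀) := by linarith
      refine gen β (α - β) _ hc1 hcos' hβ hs ?_
      filter_upwards [hc1.continuousAt.eventually (lt_mem_nhds hcos')] with θ hθ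
      rw [Wt, rpow_aux (β + 1 / 2) _ _ _ (by linarith [Real.neg_one_le_cos (N * θ)]) hθ
        (by rw [hsq θ, mul_comm]), mul_comm, mul_assoc, ← Real.rpow_add hθ]
      congr 2; ring
  · refine IsBigO.integrableAtFilter ?_ hsm (abs_rpow_integrableAt 0 (by norm_num) θ₀)
    simp only [Real.rpow_zero]
    exact (Wt_continuousAt α β N θ₀ hs).tendsto.isBigO_one ℝ

lemma Wt_intervalIntegrable (α β : ℝ) (hα : -1 < α) (hβ : -1 < β) (N : ℕ) (hN : 1 ≤ N) (a b : ℝ) :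
    IntervalIntegrable (Wt α β N) volume a b := by
  have : LocallyIntegrable (Wt α β N) volume := fun x => Wt_integrableAt α β hα hβ N hN x
  exact (this.integrableOn_isCompact isCompact_uIcc).intervalIntegrable

/-! ### Part 3: Laurent polynomials on the circle -/

/-- A Laurent polynomial, as a function with the value `0` conventions at `0`. -/
noncomputable def LP (p : Polynomial ℂ) (m : ℕ) : ℂ → ℂ := fun z => p.eval z / z ^ m

lemma LP_measurable (p : Polynomial ℂ) (m : ℕ) : Measurable (LP p m) := by
  unfold LP
  exact p.continuous.measurable.div (measurable_id.pow_const m)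

lemma LP_differentiableAt (p : Polynomial ℂ) (m : ℕ) (z : ℂ) (hz : z ≠ 0) :
    DifferentiableAt ℂ (LP p m) z := by
  unfold LP
  exact p.differentiableAt.div (differentiableAt_id.pow m) (pow_ne_zero _ hz)

lemma ne_zero_of_norm {z : ℂ} (hz : ‖z‖ = 1) : z ≠ 0 := by rintro rfl; simp at hz

lemma LP_lipschitz (p : Polynomial ℂ) (m : ℕ) : ∃ C : ℝ, 0 ≤ C ∧ ∀ z w : ℂ, ‖z‖ = 1 → ‖w‖ = 1 →
    ‖LP p m z - LP p m w‖ ≤ C * ‖z - w‖ := by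
  let φ : ℂ → ℂ := fun z => p.eval z * (starRingEnd ℂ z) ^ m
  have hφ : ContDiff ℝ 1 φ := by
    refine ContDiff.mul ?_ ?_
    · have : ContDiff ℂ 1 (fun z : ℂ => p.eval z) := p.differentiable.contDiff
      exact this.restrict_scalars ℝ
    · exact (Complex.conjCLE.contDiff (n := 1)).pow m
  obtain ⟨K, hK⟩ := (hφ.contDiffOn (s := Metric.closedBall 0 1)).exists_lipschitzOnWith (by simp)
    (convex_closedBall 0 1) (isCompact_closedBall 0 1)
  have heq : ∀ z : ℂ, ‖z‖ = 1 → LP p m z = φ z := by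
    intro z hz
    simp only [LP, φ, conj_of_norm hz, inv_pow, div_eq_mul_inv]
  refine ⟨K, K.2, fun z w hz hw => ?_⟩
  rw [heq z hz, heq w hw]
  have := hK.dist_le_mul z (by simp [hz]) w (by simp [hw])
  simpa [dist_eq_norm] using this

lemma LP_bounded (p : Polynomial ℂ) (m : ℕ) : ∃ C : ℝ, ∀ z : ℂ, ‖z‖ = 1 → ‖LP p m z‖ ≤ C := by
  have : ContinuousOn (LP p m) (Metric.sphere 0 1) := fun z hz =>
    (LP_differentiableAt p m z (ne_zero_of_norm (by simpa using hz))).continuousAt.continuousWithinAt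
  obtain ⟨C, hC⟩ := (isCompact_sphere (0 : ℂ) 1).exists_bound_of_continuousOn this
  exact ⟨C, fun z hz => hC z (by simpa using hz)⟩

lemma LP_deriv_bounded (p : Polynomial ℂ) (m : ℕ) :
    ∃ C : ℝ, ∀ z : ℂ, ‖z‖ = 1 → ‖z * deriv (LP p m) z‖ ≤ C := by
  have hd : DifferentiableOn ℂ (LP p m) {0}ᶜ := fun z hz =>
    (LP_differentiableAt p m z hz).differentiableWithinAt
  have hd' := (hd.deriv isOpen_compl_singleton).continuousOn
  have : ContinuousOn (deriv (LP p m)) (Metric.sphere 0 1) := hd'.mono (by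
    intro z hz; exact ne_zero_of_norm (by simpa using hz))
  obtain ⟨C, hC⟩ := (isCompact_sphere (0 : ℂ) 1).exists_bound_of_continuousOn this
  exact ⟨C, fun z hz => by rw [norm_mul, hz, one_mul]; exact hC z (by simpa using hz)⟩

lemma Acoef_measurable (α β : ℝ) (N : ℕ) (k : ℕ) : Measurable (Acoef α β N k) := by
  unfold Acoef
  split_ifs <;> fun_prop

lemma Lop_measurable (α β : ℝ) (N : ℕ) (p : Polynomial ℂ) (m : ℕ) :
    Measurable (Lop α β N (LP p m)) := by
  unfold Lop
  refine (measurable_id.mul (measurable_deriv _)).add (Finset.measurable_sum _ fun k _ => ?_)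
  refine (Acoef_measurable α β N k).mul (Measurable.sub ?_ (LP_measurable p m))
  exact (LP_measurable p m).comp (measurable_const.div measurable_id)

lemma Acoef_diff_bounded (α β : ℝ) (N : ℕ) (hN : 1 ≤ N) (k : ℕ) (p : Polynomial ℂ) (m : ℕ) :
    ∃ C : ℝ, ∀ z : ℂ, ‖z‖ = 1 →
      ‖Acoef α β N k z * (LP p m (qN N ^ k / z) - LP p m z)‖ ≤ C := by
  obtain ⟨m', s, _, _, _, h⟩ := Acoef_form N hN
  obtain ⟨C, hC0, hC⟩ := LP_lipschitz p m
  set a : ℝ := ‖(α : ℂ) + β + 1‖ with ha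
  set b : ℝ := ‖(α : ℂ) - β‖ with hb
  refine ⟨(a + b) * C, fun z hz => ?_⟩
  have hz0 := ne_zero_of_norm hz
  have hqk := qN_pow_norm N hN k
  rw [h, norm_mul, norm_div]
  have h1 : ‖((α : ℂ) + β + 1) * z ^ 2 + ((α : ℂ) - β) * (qN N ^ k) ^ m' * z ^ s‖ ≤ a + b := by
    refine (norm_add_le _ _).trans (le_of_eq ?_)
    rw [norm_mul, norm_mul, norm_mul, norm_pow, norm_pow z s, hz, norm_pow (qN N ^ k), hqk]
    simp [ha, hb]
  have h2 : ‖LP p m (qN N ^ k / z) - LP p m z‖ ≤ C * ‖qN N ^ k - z ^ 2‖ := by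
    refine (hC _ _ (by rw [norm_div, hqk, hz, div_one]) hz).trans (le_of_eq ?_)
    have : qN N ^ k / z - z = (qN N ^ k - z ^ 2) / z := by field_simp
    rw [this, norm_div, hz, div_one]
  by_cases hd : ‖qN N ^ k - z ^ 2‖ = 0
  · rw [hd, div_zero, zero_mul]; positivity
  · have hd' : 0 < ‖qN N ^ k - z ^ 2‖ := lt_of_le_of_ne (norm_nonneg _) (Ne.symm hd)
    calc _ ≤ (a + b) / ‖qN N ^ k - z ^ 2‖ * (C * ‖qN N ^ k - z ^ 2‖) := by gcongr
      _ = (a + b) * C := by field_simp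

lemma Lop_bounded (α β : ℝ) (N : ℕ) (hN : 1 ≤ N) (p : Polynomial ℂ) (m : ℕ) :
    ∃ C : ℝ, ∀ z : ℂ, ‖z‖ = 1 → ‖Lop α β N (LP p m) z‖ ≤ C := by
  obtain ⟨C, hC⟩ := LP_deriv_bounded p m
  choose D hD using fun k => Acoef_diff_bounded α β N hN k p m
  refine ⟨C + ∑ k ∈ Finset.range N, D k, fun z hz => ?_⟩
  exact (norm_add_le _ _).trans (add_le_add (hC z hz)
    ((norm_sum_le _ _).trans (Finset.sum_le_sum fun k _ => hD k z hz)))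

/-! ### Part 4: integrability and invariance -/

lemma norm_expI (θ : ℝ) : ‖Complex.exp (θ * Complex.I)‖ = 1 := Complex.norm_exp_ofReal_mul_I θ

lemma bdd_integrable (α β : ℝ) (hα : -1 < α) (hβ : -1 < β) (N : ℕ) (hN : 1 ≤ N)
    (φ : ℂ → ℂ) (hm : Measurable φ) (hb : ∃ C : ℝ, ∀ z : ℂ, ‖z‖ = 1 → ‖φ z‖ ≤ C)
    (u : ℝ → ℂ) (hu : Continuous u) (hu1 : ∀ θ, ‖u θ‖ = 1) (a b : ℝ) :
    IntervalIntegrable (fun θ => φ (u θ) * (Wt α β N θ : ℂ)) volume a b := by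
  obtain ⟨C, hC⟩ := hb
  have hW := (Wt_intervalIntegrable α β hα hβ N hN a b).const_mul C
  refine hW.mono_fun ?_ ?_
  · exact ((hm.comp hu.measurable).mul
      (Complex.measurable_ofReal.comp (Wt_measurable α β N))).aestronglyMeasurable
  · refine Eventually.of_forall fun θ => ?_
    have h0 := Wt_nonneg α β N θ
    simp only [norm_mul, Complex.norm_real]
    gcongr
    exact (hC _ (hu1 θ)).trans (le_abs_self C)

lemma qN_pow_exp (N j : ℕ) :
    qN N ^ j = Complex.exp (((2 * Real.pi * j / N : ℝ) : ℂ) * Complex.I) := by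
  rw [qN, ← Complex.exp_nat_mul]
  congr 1
  push_cast
  ring

lemma rot_exp (N j : ℕ) (θ : ℝ) : qN N ^ j * Complex.exp (θ * Complex.I)
    = Complex.exp (((θ + 2 * Real.pi * j / N : ℝ) : ℂ) * Complex.I) := by
  rw [qN_pow_exp, ← Complex.exp_add]
  congr 1
  push_cast
  ring

lemma refl_exp (N j : ℕ) (θ : ℝ) : qN N ^ j / Complex.exp (θ * Complex.I)
    = Complex.exp (((2 * Real.pi * j / N - θ : ℝ) : ℂ) * Complex.I) := by
  rw [qN_pow_exp, ← Complex.exp_sub]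
  congr 1
  push_cast
  ring

lemma K_periodic (α β : ℝ) (N : ℕ) (hN : 1 ≤ N) (φ : ℂ → ℂ) :
    Function.Periodic (fun θ : ℝ => φ (Complex.exp (θ * Complex.I)) * (Wt α β N θ : ℂ))
      (2 * Real.pi) := by
  intro θ
  have h1 : Wt α β N (θ + 2 * Real.pi) = Wt α β N θ := by
    have := Wt_add α β N hN N θ
    have hN' : (N : ℝ) ≠ 0 := by positivity
    rwa [mul_div_assoc, div_self hN', mul_one] at this
  have h2 : Complex.exp (((θ + 2 * Real.pi : ℝ) : ℂ) * Complex.I)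
      = Complex.exp (θ * Complex.I) := by
    push_cast
    rw [add_mul, Complex.exp_add, Complex.exp_two_pi_mul_I, mul_one]
  simp only [h1, h2]

lemma integral_rot (α β : ℝ) (N : ℕ) (hN : 1 ≤ N) (φ : ℂ → ℂ) (j : ℕ) :
    ∫ θ in (0:ℝ)..(2 * Real.pi), φ (qN N ^ j * Complex.exp (θ * Complex.I)) * (Wt α β N θ : ℂ)
    = ∫ θ in (0:ℝ)..(2 * Real.pi), φ (Complex.exp (θ * Complex.I)) * (Wt α β N θ : ℂ) := by
  have : ∀ θ : ℝ, φ (qN N ^ j * Complex.exp (θ * Complex.I)) * (Wt α β N θ : ℂ)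
      = (fun θ : ℝ => φ (Complex.exp (θ * Complex.I)) * (Wt α β N θ : ℂ))
        (θ + 2 * Real.pi * j / N) := by
    intro θ
    simp only [rot_exp, Wt_add α β N hN]
  simp only [this]
  rw [intervalIntegral.integral_comp_add_right
    (fun θ : ℝ => φ (Complex.exp (θ * Complex.I)) * (Wt α β N θ : ℂ)), zero_add, add_comm (2 * Real.pi)]
  have := (K_periodic α β N hN φ).intervalIntegral_add_eq (2 * Real.pi * j / N) 0
  rw [zero_add] at this
  exact this

lemma integral_refl (α β : ℝ) (N : ℕ) (hN : 1 ≤ N) (φ : ℂ → ℂ) (j : ℕ) :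
    ∫ θ in (0:ℝ)..(2 * Real.pi), φ (qN N ^ j / Complex.exp (θ * Complex.I)) * (Wt α β N θ : ℂ)
    = ∫ θ in (0:ℝ)..(2 * Real.pi), φ (Complex.exp (θ * Complex.I)) * (Wt α β N θ : ℂ) := by
  have : ∀ θ : ℝ, φ (qN N ^ j / Complex.exp (θ * Complex.I)) * (Wt α β N θ : ℂ)
      = (fun θ : ℝ => φ (Complex.exp (θ * Complex.I)) * (Wt α β N θ : ℂ))
        (2 * Real.pi * j / N - θ) := by
    intro θ
    have : Wt α β N (2 * Real.pi * j / N - θ) = Wt α β N θ := by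
      rw [sub_eq_neg_add, Wt_add α β N hN, Wt_neg]
    simp only [refl_exp, this]
  simp only [this]
  rw [intervalIntegral.integral_comp_sub_left
    (fun θ : ℝ => φ (Complex.exp (θ * Complex.I)) * (Wt α β N θ : ℂ)), sub_zero]
  have := (K_periodic α β N hN φ).intervalIntegral_add_eq (2 * Real.pi * j / N - 2 * Real.pi) 0
  rw [zero_add, sub_add_cancel] at this
  exact this

/-- Sum over the dihedral group. -/
noncomputable def Av (N : ℕ) (φ : ℂ → ℂ) (z : ℂ) : ℂ :=
  ∑ j ∈ Finset.range N, (φ (qN N ^ j * z) + φ (qN N ^ j / z))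

lemma Av_integrable (α β : ℝ) (hα : -1 < α) (hβ : -1 < β) (N : ℕ) (hN : 1 ≤ N)
    (φ : ℂ → ℂ) (hm : Measurable φ) (hb : ∃ C : ℝ, ∀ z : ℂ, ‖z‖ = 1 → ‖φ z‖ ≤ C) :
    IntervalIntegrable (fun θ : ℝ => Av N φ (Complex.exp (θ * Complex.I)) * (Wt α β N θ : ℂ))
      volume 0 (2 * Real.pi) ∧
    ∫ θ in (0:ℝ)..(2 * Real.pi), Av N φ (Complex.exp (θ * Complex.I)) * (Wt α β N θ : ℂ)
    = 2 * N * ∫ θ in (0:ℝ)..(2 * Real.pi), φ (Complex.exp (θ * Complex.I)) * (Wt α β N θ : ℂ) := by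
  have hc : Continuous fun θ : ℝ => Complex.exp (θ * Complex.I) := by fun_prop
  have i1 : ∀ j : ℕ, IntervalIntegrable
      (fun θ : ℝ => φ (qN N ^ j * Complex.exp (θ * Complex.I)) * (Wt α β N θ : ℂ))
      volume 0 (2 * Real.pi) := fun j =>
    bdd_integrable α β hα hβ N hN φ hm hb _ (continuous_const.mul hc)
      (fun θ => by rw [Pi.mul_apply, norm_mul, qN_pow_norm N hN, norm_expI, one_mul]) _ _
  have i2 : ∀ j : ℕ, IntervalIntegrable
      (fun θ : ℝ => φ (qN N ^ j / Complex.exp (θ * Complex.I)) * (Wt α β N θ : ℂ))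
      volume 0 (2 * Real.pi) := fun j =>
    bdd_integrable α β hα hβ N hN φ hm hb _
      (continuous_const.div hc fun θ => Complex.exp_ne_zero _)
      (fun θ => by rw [Pi.div_apply, norm_div, qN_pow_norm N hN, norm_expI, div_one]) _ _
  simp only [Av, Finset.sum_mul, add_mul]
  have i3 : ∀ j ∈ Finset.range N, IntervalIntegrable
      (fun θ : ℝ => φ (qN N ^ j * Complex.exp (θ * Complex.I)) * (Wt α β N θ : ℂ) +
        φ (qN N ^ j / Complex.exp (θ * Complex.I)) * (Wt α β N θ : ℂ))
      volume 0 (2 * Real.pi) := fun j _ => (i1 j).add (i2 j)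
  constructor
  · have := IntervalIntegrable.sum (Finset.range N) i3
    rw [Finset.sum_fn] at this
    exact this
  · rw [intervalIntegral.integral_finsetSum i3]
    have : ∀ j ∈ Finset.range N, ∫ θ in (0:ℝ)..(2 * Real.pi),
        (φ (qN N ^ j * Complex.exp (θ * Complex.I)) * (Wt α β N θ : ℂ) +
        φ (qN N ^ j / Complex.exp (θ * Complex.I)) * (Wt α β N θ : ℂ))
        = 2 * ∫ θ in (0:ℝ)..(2 * Real.pi), φ (Complex.exp (θ * Complex.I)) * (Wt α β N θ : ℂ) := by
      intro j _
      rw [intervalIntegral.integral_add (i1 j) (i2 j), integral_rot α β N hN,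
        integral_refl α β N hN]
      ring
    rw [Finset.sum_congr rfl this, Finset.sum_const, Finset.card_range, nsmul_eq_mul]
    ring

/-! ### Part 5: the pointwise identity -/

lemma Av_refl (N : ℕ) (hN : 1 ≤ N) (φ : ℂ → ℂ) (k : ℕ) (z : ℂ) :
    Av N (fun w => φ (qN N ^ k / w)) z = Av N φ z := by
  have h1 := sum_refl N hN (fun ζ => φ (ζ / z)) k
  have h2 := sum_refl N hN (fun ζ => φ (ζ * z)) k
  simp only [Av, Finset.sum_add_distrib]
  rw [← h1, ← h2, add_comm]
  congr 1
  · refine Finset.sum_congr rfl fun j _ => ?_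
    congr 1; rw [div_div_eq_mul_div, div_mul_eq_mul_div]
  · refine Finset.sum_congr rfl fun j _ => ?_
    congr 1; rw [div_div]

lemma Bfun_rot (α β : ℝ) (N : ℕ) (hN : 1 ≤ N) (j : ℕ) (z : ℂ) :
    Bfun α β N (qN N ^ j * z) = Bfun α β N z := by
  have h := qN_pow_pow N hN j
  rw [Bfun, Bfun, mul_comm 2 N, pow_mul _ N 2, pow_mul z N 2, mul_pow, h, one_mul]

lemma Bfun_conj (α β : ℝ) (N : ℕ) (z : ℂ) (hz : ‖z‖ = 1) :
    (starRingEnd ℂ) (Bfun α β N z) = Bfun α β N z⁻¹ := by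
  rw [Bfun, Bfun]
  simp [conj_of_norm hz]

/-- The defect of symmetry. -/
noncomputable def defect (α β : ℝ) (N : ℕ) (f g : ℂ → ℂ) (z : ℂ) : ℂ :=
  Lop α β N f z * (starRingEnd ℂ) (g z) - f z * (starRingEnd ℂ) (Lop α β N g z)

/-- The derivative part of the defect. -/
noncomputable def dpart (f g : ℂ → ℂ) (z : ℂ) : ℂ :=
  z * deriv f z * (starRingEnd ℂ) (g z) - f z * (starRingEnd ℂ) (z * deriv g z)

/-- The cross terms. -/
noncomputable def xpart (α β : ℝ) (N : ℕ) (f g : ℂ → ℂ) (k : ℕ) (z : ℂ) : ℂ :=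
  Acoef α β N k z * f (qN N ^ k / z) * (starRingEnd ℂ) (g z)

lemma defect_eq (α β : ℝ) (N : ℕ) (hN : 1 ≤ N) (f g : ℂ → ℂ) (z : ℂ) (hz : ‖z‖ = 1)
    (hz2 : z ^ (2 * N) ≠ 1) :
    defect α β N f g z = dpart f g z
      + ∑ k ∈ Finset.range N, (xpart α β N f g k z - xpart α β N f g k (qN N ^ k / z))
      + (Bfun α β N z - Bfun α β N z⁻¹) * (f z * (starRingEnd ℂ) (g z)) := by
  have hs := sum_Acoef α β N hN z hz2
  have e1 : Bfun α β N z = - ∑ k ∈ Finset.range N, Acoef α β N k z := by rw [hs, neg_neg]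
  have e2 : Bfun α β N z⁻¹ = - ∑ k ∈ Finset.range N, Acoef α β N k (qN N ^ k / z) := by
    rw [← Bfun_conj α β N z hz, e1, map_neg, map_sum]
    simp only [Acoef_refl α β N hN _ z hz]
  rw [e1, e2, defect, dpart, Lop, Lop, map_add, map_sum]
  simp only [map_mul, map_sub, Acoef_refl α β N hN _ z hz, xpart,
    div_div_cancel₀ (pow_ne_zero _ (qN_ne_zero N))]
  have : ∀ (a b c d x y : ℂ) (S T U V W: ℂ), S * b - a * T = U + (-V + W) * (a * b) →
      (x + S) * b - a * (y + T) = x * b - a * y + U + (-V - -W) * (a * b) := by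
    intro a b c d x y S T U V W h
    linear_combination h
  refine this _ _ 0 0 _ _ _ _ _ _ _ ?_
  rw [Finset.sum_mul, Finset.mul_sum, ← Finset.sum_neg_distrib, ← Finset.sum_add_distrib,
    Finset.sum_mul, ← Finset.sum_sub_distrib, ← Finset.sum_add_distrib]
  refine Finset.sum_congr rfl fun k _ => ?_
  ring

/-- The odd part sum. -/
noncomputable def Od (N : ℕ) (φ : ℂ → ℂ) (z : ℂ) : ℂ :=
  ∑ j ∈ Finset.range N, (φ (qN N ^ j * z) - φ (qN N ^ j / z))

lemma Av_defect (α β : ℝ) (N : ℕ) (hN : 1 ≤ N) (f g : ℂ → ℂ) (z : ℂ) (hz : ‖z‖ = 1)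
    (hz2 : z ^ (2 * N) ≠ 1) :
    Av N (defect α β N f g) z = Av N (dpart f g) z
      + (Bfun α β N z - Bfun α β N z⁻¹) * Od N (fun w => f w * (starRingEnd ℂ) (g w)) z := by
  have hz0 := ne_zero_of_norm hz
  have hx : ∑ k ∈ Finset.range N, (Av N (xpart α β N f g k) z
      - Av N (fun w => xpart α β N f g k (qN N ^ k / w)) z) = 0 :=
    Finset.sum_eq_zero fun k _ => by rw [Av_refl N hN, sub_self]
  have h1 : ∀ j, defect α β N f g (qN N ^ j * z) = dpart f g (qN N ^ j * z)
      + ∑ k ∈ Finset.range N, (xpart α β N f g k (qN N ^ j * z)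
        - xpart α β N f g k (qN N ^ k / (qN N ^ j * z)))
      + (Bfun α β N z - Bfun α β N z⁻¹)
        * (f (qN N ^ j * z) * (starRingEnd ℂ) (g (qN N ^ j * z))) := by
    intro j
    have hn : ‖qN N ^ j * z‖ = 1 := by rw [norm_mul, qN_pow_norm N hN, hz, one_mul]
    rw [defect_eq α β N hN f g _ hn, ← Bfun_conj α β N _ hn, Bfun_rot α β N hN,
      Bfun_conj α β N _ hz]
    rw [mul_pow, mul_comm 2 N, pow_mul (qN N ^ j), qN_pow_pow N hN, one_pow, one_mul, mul_comm N 2]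
    exact hz2
  have h2 : ∀ j, defect α β N f g (qN N ^ j / z) = dpart f g (qN N ^ j / z)
      + ∑ k ∈ Finset.range N, (xpart α β N f g k (qN N ^ j / z)
        - xpart α β N f g k (qN N ^ k / (qN N ^ j / z)))
      - (Bfun α β N z - Bfun α β N z⁻¹)
        * (f (qN N ^ j / z) * (starRingEnd ℂ) (g (qN N ^ j / z))) := by
    intro j
    have hn : ‖qN N ^ j / z‖ = 1 := by rw [norm_div, qN_pow_norm N hN, hz, div_one]
    have hi : ‖z⁻¹‖ = 1 := by rw [norm_inv, hz, inv_one]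
    rw [defect_eq α β N hN f g _ hn, ← Bfun_conj α β N _ hn, div_eq_mul_inv, Bfun_rot α β N hN,
      Bfun_conj α β N _ hi, inv_inv]
    · ring
    · rw [div_pow, mul_comm 2 N, pow_mul (qN N ^ j), qN_pow_pow N hN, one_pow, one_div,
        mul_comm N 2, Ne, inv_eq_one]
      exact hz2
  rw [← add_zero (Av N (dpart f g) z), ← hx]
  simp only [Av, Od, h1, h2]
  rw [Finset.mul_sum]
  simp only [← Finset.sum_sub_distrib]
  rw [Finset.sum_comm, ← Finset.sum_add_distrib, ← Finset.sum_add_distrib]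
  refine Finset.sum_congr rfl fun j _ => ?_
  have : ∀ a b c d : ℕ → ℂ, ∑ k ∈ Finset.range N, (a k + b k - (c k + d k))
      = ∑ k ∈ Finset.range N, (a k - c k) + ∑ k ∈ Finset.range N, (b k - d k) := by
    intro a b c d
    rw [← Finset.sum_add_distrib]
    exact Finset.sum_congr rfl fun k _ => by ring
  rw [this]
  ring

lemma Od_zero (N : ℕ) (hN : 1 ≤ N) (φ : ℂ → ℂ) (z : ℂ) (hz0 : z ≠ 0) (hz : z ^ (2 * N) = 1) :
    Od N φ z = 0 := by
  have : NeZero N := ⟨by omega⟩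
  obtain ⟨k, _, hk⟩ := (qN_prim N hN).eq_pow_of_pow_eq_one (ξ := z ^ 2) (by rw [← pow_mul, hz])
  have h1 := sum_refl N hN (fun ζ => φ (ζ * z)) 0
  have h2 := sum_refl N hN (fun ζ => φ (1 / ζ * z)) k
  rw [Od, Finset.sum_sub_distrib, sub_eq_zero]
  simp only [pow_zero] at h1
  rw [← h1, ← h2]
  refine Finset.sum_congr rfl fun j _ => ?_
  congr 1
  rw [hk]
  have := pow_ne_zero j (qN_ne_zero N)
  field_simp

/-! ### Part 6: derivative along the circle -/

lemma circle_pow (N : ℕ) (t : ℝ) : Complex.exp (t * Complex.I) ^ N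
    = (Real.cos (N * t) : ℂ) + (Real.sin (N * t) : ℂ) * Complex.I := by
  rw [← Complex.exp_nat_mul, ← mul_assoc, Complex.exp_mul_I]
  push_cast
  rfl

lemma circle_sin (N : ℕ) (t : ℝ) :
    Complex.exp (t * Complex.I) ^ (2 * N) = 1 ↔ Real.sin (N * t) = 0 := by
  have h := Real.sin_sq_add_cos_sq (N * t)
  rw [mul_comm 2 N, pow_mul, circle_pow]
  generalize Real.sin (N * t) = s at *
  generalize Real.cos (N * t) = c at *
  constructor
  · intro h1
    rw [sq] at h1
    rcases mul_self_eq_one_iff.1 h1 with h2 | h2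
    · have := congrArg Complex.im h2; simpa using this
    · have := congrArg Complex.im h2; simpa using this
  · intro hs
    subst hs
    have : c ^ 2 = 1 := by linarith
    simp only [Complex.ofReal_zero, zero_mul, add_zero]
    exact_mod_cast this

lemma B_diff (α β : ℝ) (N : ℕ) (t : ℝ) (h : Real.sin (N * t) ≠ 0) :
    Complex.I * (Bfun α β N (Complex.exp (t * Complex.I))
      - Bfun α β N (Complex.exp (t * Complex.I))⁻¹)
    = ((N * (((α + β + 1) * Real.cos (N * t) + (α - β)) / Real.sin (N * t)) : ℝ) : ℂ) := by
  rw [← Bfun_conj α β N _ (norm_expI t)]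
  have h2 := mt (circle_sin N t).1 h
  have hn := norm_expI t
  have e := Real.sin_sq_add_cos_sq (N * t)
  have key : Bfun α β N (Complex.exp (t * Complex.I)) =
      N * (((α : ℂ) + β + 1) * ((Real.cos (N * t) : ℂ) + (Real.sin (N * t) : ℂ) * Complex.I)
        + (α - β)) / (2 * Complex.I * (Real.sin (N * t) : ℂ)) := by
    rw [Bfun, mul_comm 2 N, pow_mul, circle_pow]
    rw [mul_comm 2 N, pow_mul, circle_pow] at h2
    generalize Real.sin (N * t) = s at *
    generalize Real.cos (N * t) = c at *
    have hs : (s : ℂ) ≠ 0 := by exact_mod_cast h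
    have e' : (s : ℂ) ^ 2 + (c : ℂ) ^ 2 = 1 := by exact_mod_cast e
    have hI := Complex.I_sq
    rw [div_eq_div_iff (sub_ne_zero.2 h2) (by simp [hs])]
    have : ((c : ℂ) + s * Complex.I) ^ 2 - 1 = ((c : ℂ) + s * Complex.I) * (2 * Complex.I * s) := by
      linear_combination (-(s : ℂ) ^ 2) * hI + e'
    rw [this]
    ring
  rw [key]
  generalize Real.sin (N * t) = s at *
  generalize Real.cos (N * t) = c at *
  have hs : (s : ℂ) ≠ 0 := by exact_mod_cast h
  have hI := Complex.I_ne_zero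
  simp only [map_div₀, map_mul, map_add, map_sub, map_one, map_natCast, map_ofNat,
    Complex.conj_ofReal, Complex.conj_I]
  push_cast
  field_simp
  ring

lemma circle_hasDerivAt (p p' : Polynomial ℂ) (m m' : ℕ) (t : ℝ) :
    HasDerivAt (fun t : ℝ => LP p m (Complex.exp (t * Complex.I))
        * (starRingEnd ℂ) (LP p' m' (Complex.exp (t * Complex.I))))
      (Complex.I * dpart (LP p m) (LP p' m') (Complex.exp (t * Complex.I))) t := by
  have he : HasDerivAt (fun t : ℝ => Complex.exp (t * Complex.I))
      (Complex.exp (t * Complex.I) * Complex.I) t := by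
    have h1 : HasDerivAt (fun t : ℝ => (t : ℂ) * Complex.I) (1 * Complex.I) t :=
      (Complex.ofRealCLM.hasDerivAt (x := t)).mul_const Complex.I
    simpa using h1.cexp
  have hF : ∀ (p : Polynomial ℂ) (m : ℕ),
      HasDerivAt (fun t : ℝ => LP p m (Complex.exp (t * Complex.I)))
        (deriv (LP p m) (Complex.exp (t * Complex.I)) * (Complex.exp (t * Complex.I) * Complex.I)) t :=
    fun p m => by
      have h1 := (LP_differentiableAt p m (Complex.exp (t * Complex.I))
        (Complex.exp_ne_zero _)).hasDerivAt
      exact h1.comp t he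
  have hG := (hF p' m').star
  have := (hF p m).mul hG
  refine this.congr_deriv ?_
  simp only [dpart, star_mul', Complex.star_def, map_mul, Complex.conj_I]
  ring

lemma Od_hasDerivAt (N : ℕ) (p p' : Polynomial ℂ) (m m' : ℕ) (t : ℝ) :
    HasDerivAt (fun t : ℝ => Od N (fun w => LP p m w * (starRingEnd ℂ) (LP p' m' w))
        (Complex.exp (t * Complex.I)))
      (Complex.I * Av N (dpart (LP p m) (LP p' m')) (Complex.exp (t * Complex.I))) t := by
  simp only [Od, Av, Finset.mul_sum]
  refine HasDerivAt.fun_sum fun j _ => ?_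
  simp only [rot_exp, refl_exp]
  have h1 := (circle_hasDerivAt p p' m m' (t + 2 * Real.pi * j / N)).comp_add_const t
    (2 * Real.pi * j / N)
  have h2 := (circle_hasDerivAt p p' m m' (2 * Real.pi * j / N - t)).comp_const_sub
    (2 * Real.pi * j / N) t
  refine (h1.sub h2).congr_deriv ?_
  ring

/-! ### Part 7: conclusion -/

lemma integral_Av_defect (α β : ℝ) (hα : -1 < α) (hβ : -1 < β) (N : ℕ) (hN : 1 ≤ N)
    (p p' : Polynomial ℂ) (m m' : ℕ)
    (hint : IntervalIntegrable (fun θ : ℝ => Av N (defect α β N (LP p m) (LP p' m'))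
      (Complex.exp (θ * Complex.I)) * (Wt α β N θ : ℂ)) volume 0 (2 * Real.pi)) :
    ∫ θ in (0:ℝ)..(2 * Real.pi), Av N (defect α β N (LP p m) (LP p' m'))
      (Complex.exp (θ * Complex.I)) * (Wt α β N θ : ℂ) = 0 := by
  set O : ℝ → ℂ := fun t => Od N (fun w => LP p m w * (starRingEnd ℂ) (LP p' m' w))
        (Complex.exp (t * Complex.I)) with hO
  have hO0 : ∀ t : ℝ, Real.sin (N * t) = 0 → O t = 0 := fun t ht =>
    Od_zero N hN _ _ (Complex.exp_ne_zero _) ((circle_sin N t).2 ht)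
  have hOd := Od_hasDerivAt N p p' m m'
  have hd : ∀ t : ℝ, Real.sin (N * t) ≠ 0 → HasDerivAt (fun t => O t * (Wt α β N t : ℂ))
      (Complex.I * (Av N (defect α β N (LP p m) (LP p' m'))
        (Complex.exp (t * Complex.I)) * (Wt α β N t : ℂ))) t := by
    intro t ht
    have := (hOd t).mul (Wt_hasDerivAt α β N t ht).ofReal_comp
    refine this.congr_deriv ?_
    rw [Av_defect α β N hN _ _ _ (norm_expI t) (mt (circle_sin N t).1 ht), Complex.ofReal_mul,
      ← B_diff α β N t ht]
    ring
  have hcont : Continuous (fun t => O t * (Wt α β N t : ℂ)) := by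
    rw [continuous_iff_continuousAt]
    intro t
    by_cases ht : Real.sin (N * t) = 0
    · rw [ContinuousAt, hO0 t ht, zero_mul]
      have h1 : O =O[𝓝 t] (fun x => |Real.sin (N * x)|) := by
        have h2 := (hOd t).isBigO_sub
        have h3 : (fun x => O x - O t) = O := by ext x; rw [hO0 t ht, sub_zero]
        have h4 : O =O[𝓝 t] (fun x => x - t) := by rw [← h3]; exact h2
        exact h4.norm_right.trans (sin_theta N hN t ht).2
      have h5 : (fun x => O x * (Wt α β N x : ℂ)) =O[𝓝 t]
          (fun x => |Real.sin (N * x)| * Wt α β N x) := by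
        refine h1.mul ?_
        exact IsBigO.of_bound 1 (Eventually.of_forall fun x => by simp)
      exact h5.trans_tendsto (sin_mul_Wt_tendsto α β hα hβ N t ht)
    · exact (hd t ht).continuousAt
  have hcount : {t : ℝ | Real.sin (N * t) = 0}.Countable := by
    refine (Set.countable_range (fun n : ℤ => (n : ℝ) * Real.pi / N)).mono ?_
    intro t ht
    obtain ⟨n, hn⟩ := Real.sin_eq_zero_iff.1 ht
    have hN' : (N : ℝ) ≠ 0 := by positivity
    exact ⟨n, by simp only; rw [hn]; field_simp⟩
  have hI := MeasureTheory.integral_eq_of_hasDerivAt_off_countable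
    (fun t => O t * (Wt α β N t : ℂ)) _ hcount hcont.continuousOn
    (fun x hx => hd x hx.2) (hint.const_mul Complex.I)
  rw [intervalIntegral.integral_const_mul, hO0 (2 * Real.pi), hO0 0] at hI
  · simpa using hI
  · simp
  · have := Real.sin_nat_mul_pi (2 * N)
    rw [← this]; push_cast; ring_nf

lemma main_LP (α β : ℝ) (hα : -1 < α) (hβ : -1 < β) (N : ℕ) (hN : 1 ≤ N)
    (p p' : Polynomial ℂ) (m m' : ℕ) :
    ∫ θ in (0:ℝ)..(2 * Real.pi), Lop α β N (LP p m) (Complex.exp (θ * Complex.I))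
          * (starRingEnd ℂ) (LP p' m' (Complex.exp (θ * Complex.I))) * (Wt α β N θ : ℂ)
    = ∫ θ in (0:ℝ)..(2 * Real.pi), LP p m (Complex.exp (θ * Complex.I))
          * (starRingEnd ℂ) (Lop α β N (LP p' m') (Complex.exp (θ * Complex.I)))
          * (Wt α β N θ : ℂ) := by
  have hconj : Measurable (starRingEnd ℂ : ℂ → ℂ) := Complex.continuous_conj.measurable
  have bmul : ∀ u v : ℂ → ℂ, (∃ C : ℝ, ∀ z : ℂ, ‖z‖ = 1 → ‖u z‖ ≤ C) →
      (∃ C : ℝ, ∀ z : ℂ, ‖z‖ = 1 → ‖v z‖ ≤ C) →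
      ∃ C : ℝ, ∀ z : ℂ, ‖z‖ = 1 → ‖u z * (starRingEnd ℂ) (v z)‖ ≤ C := by
    rintro u v ⟨C, hC⟩ ⟨D, hD⟩
    refine ⟨C * D, fun z hz => ?_⟩
    rw [norm_mul, RCLike.norm_conj]
    exact mul_le_mul (hC z hz) (hD z hz) (norm_nonneg _) ((norm_nonneg _).trans (hC z hz))
  have m1 : Measurable fun z => Lop α β N (LP p m) z * (starRingEnd ℂ) (LP p' m' z) :=
    (Lop_measurable α β N p m).mul (hconj.comp (LP_measurable p' m'))
  have m2 : Measurable fun z => LP p m z * (starRingEnd ℂ) (Lop α β N (LP p' m') z) :=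
    (LP_measurable p m).mul (hconj.comp (Lop_measurable α β N p' m'))
  have b1 := bmul _ _ (Lop_bounded α β N hN p m) (LP_bounded p' m')
  have b2 := bmul _ _ (LP_bounded p m) (Lop_bounded α β N hN p' m')
  have hc : Continuous fun θ : ℝ => Complex.exp (θ * Complex.I) := by fun_prop
  have i1 := bdd_integrable α β hα hβ N hN _ m1 b1 _ hc norm_expI 0 (2 * Real.pi)
  have i2 := bdd_integrable α β hα hβ N hN _ m2 b2 _ hc norm_expI 0 (2 * Real.pi)
  have m3 : Measurable (defect α β N (LP p m) (LP p' m')) := m1.sub m2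
  have b3 : ∃ C : ℝ, ∀ z : ℂ, ‖z‖ = 1 → ‖defect α β N (LP p m) (LP p' m') z‖ ≤ C := by
    obtain ⟨C, hC⟩ := b1
    obtain ⟨D, hD⟩ := b2
    exact ⟨C + D, fun z hz => (norm_sub_le _ _).trans (add_le_add (hC z hz) (hD z hz))⟩
  obtain ⟨hi, he⟩ := Av_integrable α β hα hβ N hN _ m3 b3
  rw [integral_Av_defect α β hα hβ N hN p p' m m' hi] at he
  have hN' : (N : ℂ) ≠ 0 := by exact_mod_cast (by omega : N ≠ 0)
  have h0 : ∫ θ in (0:ℝ)..(2 * Real.pi), defect α β N (LP p m) (LP p' m')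
      (Complex.exp (θ * Complex.I)) * (Wt α β N θ : ℂ) = 0 := by
    rcases mul_eq_zero.1 he.symm with h | h
    · simp [hN'] at h
    · exact h
  rw [← sub_eq_zero, ← intervalIntegral.integral_sub i1 i2, ← h0]
  refine intervalIntegral.integral_congr fun θ _ => ?_
  simp only [defect]
  ring

lemma Lop_congr (α β : ℝ) (N : ℕ) (f : ℂ → ℂ) (p : Polynomial ℂ) (m : ℕ)
    (h : ∀ z : ℂ, z ≠ 0 → f z = LP p m z) (z : ℂ) (hz : z ≠ 0) :
    Lop α β N f z = Lop α β N (LP p m) z := by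
  have he : f =ᶠ[𝓝 z] LP p m := by
    filter_upwards [isOpen_ne.mem_nhds hz] with w hw using h w hw
  rw [Lop, Lop, he.deriv_eq]
  congr 1
  refine Finset.sum_congr rfl fun k _ => ?_
  rw [h z hz, h _ (div_ne_zero (pow_ne_zero _ (qN_ne_zero N)) hz)]

/-- the operator L(N) is symmetric with respect to the weight
ρ(θ;N) = (1 - cos Nθ)^{α+1/2} (1 + cos Nθ)^{β+1/2} on the unit circle. -/
theorem stmt_13 (α β : ℝ) (hα : -1 < α) (hβ : -1 < β) (N : ℕ) (hN : 1 ≤ N)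
    (f g : ℂ → ℂ) (hf : IsLaurentPoly f) (hg : IsLaurentPoly g) :
    ∫ θ in (0:ℝ)..(2 * Real.pi),
        Lop α β N f (Complex.exp (θ * Complex.I))
          * (starRingEnd ℂ) (g (Complex.exp (θ * Complex.I)))
          * (((1 - Real.cos (N * θ)) ^ (α + 1 / 2)
              * (1 + Real.cos (N * θ)) ^ (β + 1 / 2) : ℝ) : ℂ)
      = ∫ θ in (0:ℝ)..(2 * Real.pi),
          f (Complex.exp (θ * Complex.I))
            * (starRingEnd ℂ) (Lop α β N g (Complex.exp (θ * Complex.I)))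
            * (((1 - Real.cos (N * θ)) ^ (α + 1 / 2)
                * (1 + Real.cos (N * θ)) ^ (β + 1 / 2) : ℝ) : ℂ) := by
  obtain ⟨m, p, hp⟩ := hf
  obtain ⟨m', p', hp'⟩ := hg
  have hp1 : ∀ z : ℂ, z ≠ 0 → f z = LP p m z := hp
  have hp2 : ∀ z : ℂ, z ≠ 0 → g z = LP p' m' z := hp'
  have hne : ∀ θ : ℝ, Complex.exp (θ * Complex.I) ≠ 0 := fun θ => Complex.exp_ne_zero _
  have := main_LP α β hα hβ N hN p p' m m'
  simp only [fun θ : ℝ => Lop_congr α β N f p m hp1 _ (hne θ),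
    fun θ : ℝ => Lop_congr α β N g p' m' hp2 _ (hne θ),
    fun θ : ℝ => hp1 _ (hne θ), fun θ : ℝ => hp2 _ (hne θ)]
  exact this
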